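/- Let p ∈ (0,1], λ ∈ (0,1), d ≥ 2, and define F̄(w) = λ [ (1−(1−p)λ) / ( pλ^d + (1−(1−p)λ−pλ^d) e^{(d−1)(1−(1−p)λ)w} ) ]^{1/(d−1)} for w ≥ 0. Then F̄ satisfies the ODE F̄'(w) = λ(p F̄(w)^d + (1−p) F̄(w)) − F̄(w) with F̄(0) = λ. -/

import Mathlib

open Real Set

theorem stmt_16 (d : ℕ) (hd : 2 ≤ d) (p l : ℝ)
    (hp : p ∈ Set.Ioc (0:ℝ) 1) (hl : l ∈ Set.Ioo (0:ℝ) 1)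
    (F : ℝ → ℝ)
    (hF : F = fun w : ℝ => l *
      ((1 - (1 - p) * l) /
        (p * l ^ d + (1 - (1 - p) * l - p * l ^ d) *
          Real.exp (((d:ℝ) - 1) * (1 - (1 - p) * l) * w))) ^ ((1:ℝ) / ((d:ℝ) - 1))) :
    F 0 = l ∧
    ∀ w : ℝ, 0 ≤ w →
      HasDerivAt F (l * (p * F w ^ d + (1 - p) * F w) - F w) w := by
  obtain ⟨hp0, hp1⟩ := hp
  obtain ⟨hl0, hl1⟩ := hl
  obtain ⟨n, rfl⟩ : ∃ n, d = n + 1 := ⟨d - 1, by omega⟩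
  have hn : (0:ℝ) < n := by exact_mod_cast (by omega : 0 < n)
  have hn0 : n ≠ 0 := by omega
  have hc : ((n + 1 : ℕ) : ℝ) - 1 = n := by push_cast; ring
  rw [hc] at hF
  obtain ⟨a, ha⟩ : ∃ a, a = 1 - (1 - p) * l := ⟨_, rfl⟩
  obtain ⟨b, hb⟩ : ∃ b, b = p * l ^ (n + 1) := ⟨_, rfl⟩
  rw [← ha, ← hb] at hF
  have hb0 : 0 < b := by rw [hb]; positivity
  have hab : b < a := by
    have h1 : l ^ (n + 1) ≤ l := by
      have := pow_le_one₀ (n := n) hl0.le hl1.le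
      rw [pow_succ]; nlinarith
    have : p * l ^ (n + 1) ≤ p * l := by gcongr
    rw [ha, hb]; nlinarith
  have ha0 : 0 < a := hb0.trans hab
  constructor
  · rw [hF]
    simp [div_self ha0.ne']
  intro w _
  have hD : 0 < b + (a - b) * Real.exp (n * a * w) := by
    have := mul_pos (sub_pos.2 hab) (Real.exp_pos (n * a * w))
    linarith
  have hE : HasDerivAt (fun w : ℝ => Real.exp (n * a * w)) (Real.exp (n * a * w) * (n * a)) w := by
    have := ((hasDerivAt_id w).const_mul ((n:ℝ) * a)).exp
    simpa using this
  have hG := ((hasDerivAt_const w a).div ((hE.const_mul (a - b)).const_add b) hD.ne')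
  have hGpos : 0 < a / (b + (a - b) * Real.exp (n * a * w)) := div_pos ha0 hD
  have hR := ((hG.rpow_const (p := (1:ℝ) / n) (Or.inl hGpos.ne')).const_mul l)
  have hFw : F w = l * (a / (b + (a - b) * Real.exp (n * a * w))) ^ ((1:ℝ) / n) := by rw [hF]
  have hpow : F w ^ n = l ^ n * (a / (b + (a - b) * Real.exp (n * a * w))) := by
    rw [hFw, mul_pow, one_div, Real.rpow_inv_natCast_pow hGpos.le hn0]
  have hFR : F = (fun y => l * ((fun _ : ℝ => a) /
      fun x : ℝ => b + (a - b) * Real.exp (n * a * x)) y ^ ((1:ℝ) / n)) := hF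
  rw [← hFR] at hR
  refine hR.congr_deriv (Eq.symm ?_)
  have h1 : l * (p * F w ^ (n + 1) + (1 - p) * F w) - F w
      = F w * (b * (a / (b + (a - b) * Real.exp (n * a * w))) - a) := by
    rw [pow_succ, hpow, hb, ha]; ring
  rw [h1, hFw]
  simp only [Pi.div_apply]
  rw [Real.rpow_sub_one hGpos.ne']
  generalize (a / (b + (a - b) * Real.exp (n * a * w))) ^ ((1:ℝ) / n) = X
  generalize Real.exp (n * a * w) = E at *
  have := hD.ne'
  field_simp
  ring
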